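/- Right multiplication by Sq³ = Sq¹Sq² on A(1) has kernel equal to the left ideal generated by Sq¹ and Sq²Sq³; consequently there is a short exact sequence of graded left A(1)-modules 0 → Σ³ A(1)/(Sq¹, Sq²Sq³) → A(1) → A(1)/(Sq³) → 0, where the first map sends the generator to Sq³. -/

import Mathlib

noncomputable section

/-- Relations defining A(1): (Sq¹)² = 0, Sq²Sq² = Sq¹Sq²Sq¹, Sq²Sq¹Sq²Sq¹ = Sq¹Sq²Sq¹Sq². -/
inductive A1Rel : FreeAlgebra (ZMod 2) (Fin 2) → FreeAlgebra (ZMod 2) (Fin 2) → Prop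
  | sq1_sq1 : A1Rel (FreeAlgebra.ι (ZMod 2) (0 : Fin 2) * FreeAlgebra.ι (ZMod 2) 0) 0
  | adem : A1Rel (FreeAlgebra.ι (ZMod 2) (1 : Fin 2) * FreeAlgebra.ι (ZMod 2) 1)
      (FreeAlgebra.ι (ZMod 2) (0 : Fin 2) * FreeAlgebra.ι (ZMod 2) 1 * FreeAlgebra.ι (ZMod 2) 0)
  | top : A1Rel
      (FreeAlgebra.ι (ZMod 2) (1 : Fin 2) * FreeAlgebra.ι (ZMod 2) 0 *
        FreeAlgebra.ι (ZMod 2) 1 * FreeAlgebra.ι (ZMod 2) 0)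
      (FreeAlgebra.ι (ZMod 2) (0 : Fin 2) * FreeAlgebra.ι (ZMod 2) 1 *
        FreeAlgebra.ι (ZMod 2) 0 * FreeAlgebra.ι (ZMod 2) 1)

/-- The algebra A(1), subalgebra of the mod-2 Steenrod algebra generated by Sq¹, Sq². -/
abbrev A1 := RingQuot A1Rel

def Sq1 : A1 := RingQuot.mkAlgHom (ZMod 2) A1Rel (FreeAlgebra.ι (ZMod 2) 0)
def Sq2 : A1 := RingQuot.mkAlgHom (ZMod 2) A1Rel (FreeAlgebra.ι (ZMod 2) 1)
def Sq3 : A1 := Sq1 * Sq2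

/-- Generators, for building monomial words. -/
def A1gen : Fin 2 → A1
  | 0 => Sq1
  | 1 => Sq2

/-- Weight of a word: Sq¹ has degree 1, Sq² has degree 2. -/
def A1wt (l : List (Fin 2)) : ℕ := (l.map fun i => (i : ℕ) + 1).sum

/-- The product of a word of generators. -/
def A1word (l : List (Fin 2)) : A1 := (l.map A1gen).prod

/-- The degree-`n` graded component of A(1): the F₂-span of monomials of weight `n`. -/
def A1deg (n : ℕ) : Submodule (ZMod 2) A1 :=
  Submodule.span (ZMod 2) {x | ∃ l, A1wt l = n ∧ x = A1word l}

/-- The degree-`n` component of a cyclic module A(1)/I. -/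
def A1qdeg (I : Submodule A1 A1) (n : ℕ) : Submodule (ZMod 2) (A1 ⧸ I) :=
  Submodule.map (I.mkQ.restrictScalars (ZMod 2)) (A1deg n)

lemma Sq1_mul_Sq1 : Sq1 * Sq1 = 0 := by
  simpa [Sq1] using RingQuot.mkAlgHom_rel (ZMod 2) A1Rel.sq1_sq1

lemma Sq2_mul_Sq2 : Sq2 * Sq2 = Sq1 * Sq2 * Sq1 := by
  simpa [Sq1, Sq2] using RingQuot.mkAlgHom_rel (ZMod 2) A1Rel.adem

lemma Sq2_mul_Sq1_mul_Sq2_mul_Sq1 :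
    Sq2 * Sq1 * Sq2 * Sq1 = Sq1 * Sq2 * Sq1 * Sq2 := by
  simpa [Sq1, Sq2] using RingQuot.mkAlgHom_rel (ZMod 2) A1Rel.top

lemma Sq1_mul_Sq3 : Sq1 * Sq3 = 0 := by
  rw [Sq3, ← mul_assoc, Sq1_mul_Sq1, zero_mul]

lemma Sq2_mul_Sq2_mul_Sq3 : Sq2 * (Sq2 * Sq3) = 0 := by
  rw [← mul_assoc, Sq2_mul_Sq2, mul_assoc, Sq1_mul_Sq3, mul_zero]

lemma Sq3_mul_Sq2 : Sq3 * Sq2 = 0 := by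
  rw [Sq3, mul_assoc, Sq2_mul_Sq2, ← mul_assoc, ← mul_assoc, Sq1_mul_Sq1, zero_mul, zero_mul]

lemma Sq2_mul_Sq3_mul_Sq3 : Sq2 * Sq3 * Sq3 = 0 := by
  have h : Sq2 * Sq3 * Sq3 = Sq2 * Sq1 * Sq2 * Sq1 * Sq2 := by
    simp only [Sq3, mul_assoc]
  rw [h, Sq2_mul_Sq1_mul_Sq2_mul_Sq1, mul_assoc, Sq2_mul_Sq2, mul_assoc (Sq1 * Sq2),
    ← mul_assoc Sq1 (Sq1 * Sq2), ← mul_assoc Sq1 Sq1, Sq1_mul_Sq1, zero_mul, zero_mul, mul_zero]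

/-- Left multiplication by Sq¹ in the basis
`1, Sq¹, Sq², Sq¹Sq², Sq²Sq¹, Sq¹Sq²Sq¹, Sq²Sq¹Sq², Sq¹Sq²Sq¹Sq²` of A(1). -/
def Sq1End : Module.End (ZMod 2) (Fin 8 → ZMod 2) where
  toFun v := ![0, v 0, 0, v 2, 0, v 4, 0, v 6]
  map_add' v w := by ext i; fin_cases i <;> simp
  map_smul' c v := by ext i; fin_cases i <;> simp

/-- Left multiplication by Sq² in the same basis as `Sq1End`. -/
def Sq2End : Module.End (ZMod 2) (Fin 8 → ZMod 2) where
  toFun v := ![0, 0, v 0, 0, v 1, v 2, v 3, v 5]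
  map_add' v w := by ext i; fin_cases i <;> simp
  map_smul' c v := by ext i; fin_cases i <;> simp

/-- The regular representation of A(1). -/
def A1rep : A1 →ₐ[ZMod 2] Module.End (ZMod 2) (Fin 8 → ZMod 2) :=
  RingQuot.liftAlgHom (ZMod 2) ⟨FreeAlgebra.lift (ZMod 2) ![Sq1End, Sq2End], fun x y h => by
    cases h <;> refine LinearMap.ext fun v => funext fun i => ?_ <;> fin_cases i <;>
      simp [Sq1End, Sq2End]⟩

lemma Sq3_mul_Sq3_ne_zero : Sq3 * Sq3 ≠ 0 := by
  intro h
  have h' := congrFun (LinearMap.congr_fun (congrArg A1rep h) (Pi.single 0 1)) 7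
  simp [A1rep, Sq1, Sq2, Sq3, Sq1End, Sq2End] at h'

lemma smul_Sq3_mul_Sq3_eq_zero {c : ZMod 2} (h : c • (Sq3 * Sq3) = 0) : c = 0 := by
  by_contra hc
  exact Sq3_mul_Sq3_ne_zero ((smul_eq_zero_iff_right hc).1 h)

lemma A1_induction {p : A1 → Prop} (one : p 1) (add : ∀ x y, p x → p y → p (x + y))
    (smul : ∀ (c : ZMod 2) x, p x → p (c • x)) (sq1 : ∀ x, p x → p (Sq1 * x))
    (sq2 : ∀ x, p x → p (Sq2 * x)) (x : A1) : p x := by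
  suffices h : ∀ y, p y → p (x * y) by simpa using h 1 one
  obtain ⟨x, rfl⟩ := RingQuot.mkAlgHom_surjective (ZMod 2) A1Rel x
  induction x using FreeAlgebra.induction with
  | grade0 c =>
    intro y hy
    simpa [Algebra.smul_def] using smul c y hy
  | grade1 i =>
    fin_cases i
    exacts [sq1, sq2]
  | mul x z hx hz =>
    intro y hy
    simpa [mul_assoc] using hx _ (hz y hy)
  | add x z hx hz =>
    intro y hy
    simpa [add_mul] using add _ _ (hx y hy) (hz y hy)

lemma exists_eq_add_mem_span_Sq1_Sq2_mul_Sq3 (x : A1) : ∃ c d e : ZMod 2,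
    ∃ y ∈ Submodule.span A1 {Sq1, Sq2 * Sq3}, x = c • 1 + d • Sq2 + e • Sq3 + y := by
  have h₁ : Sq1 ∈ Submodule.span A1 {Sq1, Sq2 * Sq3} := Submodule.subset_span (by simp)
  have h₂ : Sq2 * Sq3 ∈ Submodule.span A1 {Sq1, Sq2 * Sq3} := Submodule.subset_span (by simp)
  induction x using A1_induction with
  | one => exact ⟨1, 0, 0, 0, zero_mem _, by simp⟩
  | add x x' hx hx' =>
    obtain ⟨c, d, e, y, hy, rfl⟩ := hx
    obtain ⟨c', d', e', y', hy', rfl⟩ := hx'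
    exact ⟨c + c', d + d', e + e', y + y', add_mem hy hy', by simp only [add_smul]; abel⟩
  | smul r x hx =>
    obtain ⟨c, d, e, y, hy, rfl⟩ := hx
    exact ⟨r * c, r * d, r * e, r • y, Submodule.smul_of_tower_mem _ r hy,
      by simp only [smul_add, mul_smul]⟩
  | sq1 x hx =>
    obtain ⟨c, d, e, y, hy, rfl⟩ := hx
    refine ⟨0, 0, d, c • Sq1 + Sq1 * y,
      add_mem (Submodule.smul_of_tower_mem _ c h₁) (Submodule.smul_mem _ Sq1 hy), ?_⟩
    simp only [mul_add, mul_smul_comm, Sq1_mul_Sq3, mul_one, zero_smul, smul_zero,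
      show Sq1 * Sq2 = Sq3 from rfl]
    abel
  | sq2 x hx =>
    obtain ⟨c, d, e, y, hy, rfl⟩ := hx
    refine ⟨0, c, 0, d • (Sq1 * Sq2 * Sq1) + e • (Sq2 * Sq3) + Sq2 * y,
      add_mem (add_mem (Submodule.smul_of_tower_mem _ d (Submodule.smul_mem _ _ h₁))
        (Submodule.smul_of_tower_mem _ e h₂)) (Submodule.smul_mem _ Sq2 hy), ?_⟩
    simp only [mul_add, mul_smul_comm, Sq2_mul_Sq2, mul_one, zero_smul]
    abel

lemma span_Sq1_Sq2_mul_Sq3_le_ker : Submodule.span A1 {Sq1, Sq2 * Sq3} ≤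
    LinearMap.ker (LinearMap.toSpanSingleton A1 A1 Sq3) := by
  rw [Submodule.span_le]
  rintro _ (rfl | rfl)
  exacts [Sq1_mul_Sq3, Sq2_mul_Sq3_mul_Sq3]

lemma mul_Sq3_eq_zero_of_mem {x : A1} (hx : x ∈ Submodule.span A1 {Sq1, Sq2 * Sq3}) :
    x * Sq3 = 0 :=
  span_Sq1_Sq2_mul_Sq3_le_ker hx

lemma mul_Sq3_eq_zero_iff (x : A1) :
    x * Sq3 = 0 ↔ x ∈ Submodule.span A1 {Sq1, Sq2 * Sq3} := by
  refine ⟨fun hx => ?_, mul_Sq3_eq_zero_of_mem⟩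
  obtain ⟨c, d, e, y, hy, rfl⟩ := exists_eq_add_mem_span_Sq1_Sq2_mul_Sq3 x
  simp only [add_mul, mul_Sq3_eq_zero_of_mem hy, add_zero, smul_mul_assoc, one_mul] at hx
  have hSq1 : Sq1 * (Sq2 * Sq3) = Sq3 * Sq3 := by rw [← mul_assoc, ← Sq3]
  have hc : c = 0 := smul_Sq3_mul_Sq3_eq_zero <| by
    simpa [mul_add, ← mul_assoc Sq3, Sq3_mul_Sq2, mul_assoc Sq1, Sq2_mul_Sq3_mul_Sq3,
      show Sq3 * Sq3 * Sq3 = 0 by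
        rw [← hSq1, mul_assoc, Sq2_mul_Sq3_mul_Sq3, mul_zero]] using congrArg (Sq3 * ·) hx
  subst hc
  have hd : d = 0 := smul_Sq3_mul_Sq3_eq_zero <| by
    simpa [mul_add, hSq1, ← mul_assoc Sq1 Sq3, Sq1_mul_Sq3] using congrArg (Sq1 * ·) hx
  subst hd
  have he : e = 0 := smul_Sq3_mul_Sq3_eq_zero <| by simpa using hx
  subst he
  simpa using hy

lemma mul_Sq3_mem_A1deg {n : ℕ} {x : A1} (hx : x ∈ A1deg n) : x * Sq3 ∈ A1deg (n + 3) := by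
  have h : A1deg n ≤ (A1deg (n + 3)).comap (LinearMap.mulRight (ZMod 2) Sq3) := by
    refine Submodule.span_le.2 ?_
    rintro _ ⟨l, rfl, rfl⟩
    exact Submodule.subset_span ⟨l ++ [0, 1], by simp [A1wt], by simp [A1word, A1gen, Sq3, mul_assoc]⟩
  exact h hx

/-- Right multiplication by Sq³ = Sq¹Sq² on A(1) has kernel the left ideal generated by
Sq¹ and Sq²Sq³; consequently there is a short exact sequence of graded left A(1)-modules
`0 → Σ³ A(1)/(Sq¹, Sq²Sq³) → A(1) → A(1)/(Sq³) → 0`, the first map sending the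
generator to Sq³ (raising degrees by 3), the second the canonical projection. -/
theorem right_mul_sq3_kernel :
    (∀ x : A1, x * Sq3 = 0 ↔ x ∈ Submodule.span A1 {Sq1, Sq2 * Sq3}) ∧
    ∃ f : (A1 ⧸ (Submodule.span A1 {Sq1, Sq2 * Sq3})) →ₗ[A1] A1,
      f ((Submodule.span A1 {Sq1, Sq2 * Sq3}).mkQ 1) = Sq3 ∧
      Function.Injective f ∧
      LinearMap.range f = LinearMap.ker (Submodule.span A1 {Sq3}).mkQ ∧
      (∀ n : ℕ, ∀ x ∈ A1qdeg (Submodule.span A1 {Sq1, Sq2 * Sq3}) n, f x ∈ A1deg (n + 3)) := by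
  refine ⟨mul_Sq3_eq_zero_iff, Submodule.liftQ _ (LinearMap.toSpanSingleton A1 A1 Sq3)
    span_Sq1_Sq2_mul_Sq3_le_ker, ?_, ?_, ?_, ?_⟩
  · rw [Submodule.mkQ_apply, Submodule.liftQ_apply, LinearMap.toSpanSingleton_apply, one_smul]
  · rw [← LinearMap.ker_eq_bot]
    exact Submodule.ker_liftQ_eq_bot _ _ _ fun x hx => (mul_Sq3_eq_zero_iff x).1 hx
  · rw [Submodule.range_liftQ, LinearMap.range_toSpanSingleton, Submodule.ker_mkQ]
  · rintro n _ ⟨x, hx, rfl⟩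
    exact mul_Sq3_mem_A1deg hx

end
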